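/- CVaR_δ is a coherent risk measure: it satisfies monotonicity, translation invariance, positive homogeneity, and subadditivity (equivalently, convexity) on the space of integrable random variables. -/

import Mathlib

open MeasureTheory Set

/-- `CVaR_δ(X) = min_α [α + (1/(1-δ)) E[(X-α)⁺]]` (Rockafellar–Uryasev form). -/
noncomputable def CVaR {Ω : Type*} [MeasurableSpace Ω] (P : Measure Ω) (δ : ℝ)
    (X : Ω → ℝ) : ℝ :=
  ⨅ α : ℝ, (α + (1 - δ)⁻¹ * ∫ ω, max (X ω - α) 0 ∂P)

/-!
The objective `α + (1 - δ)⁻¹ * ∫ (X - α)⁺` is jointly sublinear in `(X, α)`, monotone in `X`, and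
equivariant when `X` and `α` are shifted by the same constant; all of this survives minimization
over `α`. Since an unbounded real infimum is the junk value `0`, the objective must also be bounded
below: the mean of `X` is a lower bound because `(1 - δ)⁻¹` is at least the inverse of the total
mass.
-/

/-- The Rockafellar–Uryasev objective, whose infimum over the threshold `α` is `CVaR P δ X`. -/
noncomputable def cvarObjective {Ω : Type*} [MeasurableSpace Ω] (P : Measure Ω) (δ : ℝ)
    (X : Ω → ℝ) (α : ℝ) : ℝ :=
  α + (1 - δ)⁻¹ * ∫ ω, max (X ω - α) 0 ∂P

section

variable {Ω : Type*} [MeasurableSpace Ω] {P : Measure Ω} {δ : ℝ} {X Y : Ω → ℝ}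

lemma integrable_max_sub_const_zero [IsFiniteMeasure P] (hX : Integrable X P) (α : ℝ) :
    Integrable (fun ω => max (X ω - α) 0) P :=
  (hX.sub (integrable_const α)).pos_part

lemma cvarObjective_mono [IsFiniteMeasure P] (hδ : δ ≤ 1) (hX : Integrable X P)
    (hYX : ∀ᵐ ω ∂P, Y ω ≤ X ω) (α : ℝ) :
    cvarObjective P δ Y α ≤ cvarObjective P δ X α := by
  have hexcess : ∫ ω, max (Y ω - α) 0 ∂P ≤ ∫ ω, max (X ω - α) 0 ∂P := by
    refine integral_mono_of_nonneg (ae_of_all _ fun ω => le_max_right _ _)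
      (integrable_max_sub_const_zero hX α) ?_
    filter_upwards [hYX] with ω hω
    gcongr
  have hcoeff : 0 ≤ (1 - δ)⁻¹ := inv_nonneg.2 (sub_nonneg.2 hδ)
  exact add_le_add le_rfl (mul_le_mul_of_nonneg_left hexcess hcoeff)

lemma cvarObjective_add_const (P : Measure Ω) (δ : ℝ) (X : Ω → ℝ) (α c : ℝ) :
    cvarObjective P δ (fun ω => X ω + c) (α + c) = cvarObjective P δ X α + c := by
  simp only [cvarObjective, add_sub_add_right_eq_sub]
  ring

lemma cvarObjective_const_mul (P : Measure Ω) (δ : ℝ) (X : Ω → ℝ) (α : ℝ) {l : ℝ} (hl : 0 ≤ l) :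
    cvarObjective P δ (fun ω => l * X ω) (l * α) = l * cvarObjective P δ X α := by
  have hexcess (ω : Ω) : max (l * X ω - l * α) 0 = l * max (X ω - α) 0 := by
    rw [mul_max_of_nonneg _ _ hl, mul_sub, mul_zero]
  simp only [cvarObjective, hexcess, integral_const_mul]
  ring

lemma cvarObjective_add_le [IsFiniteMeasure P] (hδ : δ ≤ 1) (hX : Integrable X P)
    (hY : Integrable Y P) (α β : ℝ) :
    cvarObjective P δ (fun ω => X ω + Y ω) (α + β) ≤
      cvarObjective P δ X α + cvarObjective P δ Y β := by
  have hX' := integrable_max_sub_const_zero hX α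
  have hY' := integrable_max_sub_const_zero hY β
  have hexcess : ∫ ω, max (X ω + Y ω - (α + β)) 0 ∂P ≤
      ∫ ω, max (X ω - α) 0 ∂P + ∫ ω, max (Y ω - β) 0 ∂P := by
    rw [← integral_add hX' hY']
    refine integral_mono_of_nonneg (ae_of_all _ fun ω => le_max_right _ _) (hX'.add hY')
      (ae_of_all _ fun ω => ?_)
    simpa only [add_sub_add_comm, add_zero] using
      max_add_add_le_max_add_max (a := X ω - α) (b := Y ω - β) (c := 0) (d := 0)
  have hcoeff : 0 ≤ (1 - δ)⁻¹ := inv_nonneg.2 (sub_nonneg.2 hδ)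
  calc cvarObjective P δ (fun ω => X ω + Y ω) (α + β)
      ≤ α + β + (1 - δ)⁻¹ * (∫ ω, max (X ω - α) 0 ∂P + ∫ ω, max (Y ω - β) 0 ∂P) :=
        add_le_add le_rfl (mul_le_mul_of_nonneg_left hexcess hcoeff)
    _ = cvarObjective P δ X α + cvarObjective P δ Y β := by
        unfold cvarObjective
        ring

lemma CVaR_const_mul_of_pos (P : Measure Ω) (δ : ℝ) (X : Ω → ℝ) {l : ℝ} (hl : 0 < l) :
    CVaR P δ (fun ω => l * X ω) = l * CVaR P δ X :=
  calc CVaR P δ (fun ω => l * X ω)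
      = ⨅ α, cvarObjective P δ (fun ω => l * X ω) (l * α) :=
        ((Equiv.mulLeft₀ l hl.ne').iInf_comp).symm
    _ = ⨅ α, l * cvarObjective P δ X α := by simp only [cvarObjective_const_mul P δ X _ hl.le]
    _ = l * CVaR P δ X := (Real.mul_iInf_of_nonneg hl.le _).symm

variable [IsFiniteMeasure P]

lemma average_le_cvarObjective (hδ : δ < 1) (hP : 1 - δ ≤ P.real univ) (hX : Integrable X P)
    (α : ℝ) : ⨍ ω, X ω ∂P ≤ cvarObjective P δ X α := by
  have hmass : 0 < P.real univ := (sub_pos.2 hδ).trans_le hP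
  have hexcess : ∫ ω, X ω ∂P - P.real univ * α ≤ ∫ ω, max (X ω - α) 0 ∂P :=
    calc ∫ ω, X ω ∂P - P.real univ * α = ∫ ω, (X ω - α) ∂P := by
          rw [integral_sub hX (integrable_const α), integral_const, smul_eq_mul]
      _ ≤ ∫ ω, max (X ω - α) 0 ∂P :=
          integral_mono (hX.sub (integrable_const α)) (integrable_max_sub_const_zero hX α)
            fun ω => le_max_left _ _
  have hexcess_nonneg : 0 ≤ ∫ ω, max (X ω - α) 0 ∂P := integral_nonneg fun ω => le_max_right _ _
  calc ⨍ ω, X ω ∂P = α + (P.real univ)⁻¹ * (∫ ω, X ω ∂P - P.real univ * α) := by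
        rw [average_eq, smul_eq_mul]
        field_simp
        ring
    _ ≤ α + (P.real univ)⁻¹ * ∫ ω, max (X ω - α) 0 ∂P := by gcongr
    _ ≤ cvarObjective P δ X α :=
        add_le_add le_rfl
          (mul_le_mul_of_nonneg_right (inv_anti₀ (sub_pos.2 hδ) hP) hexcess_nonneg)

lemma bddBelow_range_cvarObjective (hδ : δ < 1) (hP : 1 - δ ≤ P.real univ)
    (hX : Integrable X P) : BddBelow (range (cvarObjective P δ X)) :=
  ⟨⨍ ω, X ω ∂P, forall_mem_range.2 (average_le_cvarObjective hδ hP hX)⟩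

lemma CVaR_le_cvarObjective (hδ : δ < 1) (hP : 1 - δ ≤ P.real univ) (hX : Integrable X P)
    (α : ℝ) : CVaR P δ X ≤ cvarObjective P δ X α :=
  ciInf_le (bddBelow_range_cvarObjective hδ hP hX) α

lemma average_le_CVaR (hδ : δ < 1) (hP : 1 - δ ≤ P.real univ) (hX : Integrable X P) :
    ⨍ ω, X ω ∂P ≤ CVaR P δ X :=
  le_ciInf (average_le_cvarObjective hδ hP hX)

lemma CVaR_mono (hδ : δ < 1) (hP : 1 - δ ≤ P.real univ) (hX : Integrable X P)
    (hY : Integrable Y P) (hYX : ∀ᵐ ω ∂P, Y ω ≤ X ω) : CVaR P δ Y ≤ CVaR P δ X :=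
  ciInf_mono (bddBelow_range_cvarObjective hδ hP hY) (cvarObjective_mono hδ.le hX hYX)

lemma CVaR_add_const (hδ : δ < 1) (hP : 1 - δ ≤ P.real univ) (hX : Integrable X P) (c : ℝ) :
    CVaR P δ (fun ω => X ω + c) = CVaR P δ X + c :=
  calc CVaR P δ (fun ω => X ω + c)
      = ⨅ α, cvarObjective P δ (fun ω => X ω + c) (α + c) :=
        ((Equiv.addRight c).iInf_comp).symm
    _ = ⨅ α, (cvarObjective P δ X α + c) := by simp only [cvarObjective_add_const]
    _ = CVaR P δ X + c := (ciInf_add (bddBelow_range_cvarObjective hδ hP hX) c).symm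

lemma CVaR_zero (hδ : δ < 1) (hP : 1 - δ ≤ P.real univ) : CVaR P δ (fun _ => 0) = 0 := by
  have hzero : Integrable (fun _ : Ω => (0 : ℝ)) P := integrable_const 0
  apply le_antisymm
  · simpa [cvarObjective] using CVaR_le_cvarObjective hδ hP hzero 0
  · simpa [average_eq] using average_le_CVaR hδ hP hzero

lemma CVaR_const_mul (hδ : δ < 1) (hP : 1 - δ ≤ P.real univ) (X : Ω → ℝ) {l : ℝ} (hl : 0 ≤ l) :
    CVaR P δ (fun ω => l * X ω) = l * CVaR P δ X := by
  obtain rfl | hpos := hl.eq_or_lt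
  · simpa only [zero_mul] using CVaR_zero hδ hP
  · exact CVaR_const_mul_of_pos P δ X hpos

lemma CVaR_add_le (hδ : δ < 1) (hP : 1 - δ ≤ P.real univ) (hX : Integrable X P)
    (hY : Integrable Y P) : CVaR P δ (fun ω => X ω + Y ω) ≤ CVaR P δ X + CVaR P δ Y :=
  le_ciInf_add_ciInf fun α β =>
    (CVaR_le_cvarObjective hδ hP (hX.add hY) (α + β)).trans (cvarObjective_add_le hδ.le hX hY α β)

lemma CVaR_const_mul_add_const_mul_le (hδ : δ < 1) (hP : 1 - δ ≤ P.real univ)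
    (hX : Integrable X P) (hY : Integrable Y P) {a b : ℝ} (ha : 0 ≤ a) (hb : 0 ≤ b) :
    CVaR P δ (fun ω => a * X ω + b * Y ω) ≤ a * CVaR P δ X + b * CVaR P δ Y := by
  rw [← CVaR_const_mul hδ hP X ha, ← CVaR_const_mul hδ hP Y hb]
  exact CVaR_add_le hδ hP (hX.const_mul a) (hY.const_mul b)

end

theorem CVaR_is_coherent_general {Ω : Type*} [MeasurableSpace Ω] (P : Measure Ω)
    [IsFiniteMeasure P] (δ : ℝ) (hδ : δ < 1) (hP : 1 - δ ≤ P.real univ) :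
    (∀ X Y : Ω → ℝ, Integrable X P → Integrable Y P → (∀ᵐ ω ∂P, Y ω ≤ X ω) →
        CVaR P δ Y ≤ CVaR P δ X) ∧
      (∀ (X : Ω → ℝ), Integrable X P → ∀ c : ℝ,
        CVaR P δ (fun ω => X ω + c) = CVaR P δ X + c) ∧
      (∀ (X : Ω → ℝ), Integrable X P → ∀ l : ℝ, 0 ≤ l →
        CVaR P δ (fun ω => l * X ω) = l * CVaR P δ X) ∧
      (∀ X Y : Ω → ℝ, Integrable X P → Integrable Y P →
        CVaR P δ (fun ω => X ω + Y ω) ≤ CVaR P δ X + CVaR P δ Y) ∧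
      (∀ X Y : Ω → ℝ, Integrable X P → Integrable Y P → ∀ l : ℝ, 0 ≤ l → l ≤ 1 →
        CVaR P δ (fun ω => l * X ω + (1 - l) * Y ω) ≤
          l * CVaR P δ X + (1 - l) * CVaR P δ Y) :=
  ⟨fun _ _ hX hY hYX => CVaR_mono hδ hP hX hY hYX,
    fun _ hX c => CVaR_add_const hδ hP hX c,
    fun X _ _ hl => CVaR_const_mul hδ hP X hl,
    fun _ _ hX hY => CVaR_add_le hδ hP hX hY,
    fun _ _ hX hY _ hl hl' =>
      CVaR_const_mul_add_const_mul_le hδ hP hX hY hl (sub_nonneg.2 hl')⟩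

/-- `CVaR_δ` is a coherent risk measure on integrable random variables:
monotone, translation invariant, positively homogeneous and subadditive (hence convex). -/
theorem CVaR_is_coherent {Ω : Type*} [MeasurableSpace Ω] (P : Measure Ω)
    [IsProbabilityMeasure P] (δ : ℝ) (hδ : δ ∈ Set.Ioo (0 : ℝ) 1) :
    (∀ X Y : Ω → ℝ, Integrable X P → Integrable Y P → (∀ᵐ ω ∂P, Y ω ≤ X ω) →
        CVaR P δ Y ≤ CVaR P δ X) ∧
      (∀ (X : Ω → ℝ), Integrable X P → ∀ c : ℝ,
        CVaR P δ (fun ω => X ω + c) = CVaR P δ X + c) ∧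
      (∀ (X : Ω → ℝ), Integrable X P → ∀ l : ℝ, 0 ≤ l →
        CVaR P δ (fun ω => l * X ω) = l * CVaR P δ X) ∧
      (∀ X Y : Ω → ℝ, Integrable X P → Integrable Y P →
        CVaR P δ (fun ω => X ω + Y ω) ≤ CVaR P δ X + CVaR P δ Y) ∧
      (∀ X Y : Ω → ℝ, Integrable X P → Integrable Y P → ∀ l : ℝ, 0 ≤ l → l ≤ 1 →
        CVaR P δ (fun ω => l * X ω + (1 - l) * Y ω) ≤
          l * CVaR P δ X + (1 - l) * CVaR P δ Y) :=
  CVaR_is_coherent_general P δ hδ.2 (by simpa using hδ.1.le)
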